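/- Let L be a field of characteristic zero and C an algebraically closed extension of L. Let P ∈ L[X] be a monic nonconstant polynomial with zero set Z = {x ∈ C : P(x) = 0}, and let Q ∈ L[X]. Then the invertibility-query of Q for Z satisfies Qu(Q,Z) = card{x ∈ C : P(x) = 0 and Q(x) ≠ 0} = deg(P) − deg(gcd(P, P'·Q)), where P' is the derivative of P. -/

import Mathlib

/-!
Let `x` be a root of `P` of multiplicity `m`. It has multiplicity at least `m - 1` in `P'`, with
equality if `m` is nonzero in the field. Hence its multiplicity in `gcd (P, P' * Q)` is `m` if
`Q x = 0`, and `m - 1` if `Q x ≠ 0` and `m` is nonzero in the field. So removing the roots of the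
gcd from those of `P`, counted with multiplicity, leaves each root of `P` at which `Q` does not
vanish exactly once.
-/

open Polynomial

theorem isRoot_of_cast_rootMultiplicity_ne_zero {R : Type*} [CommRing R] {p : R[X]} {x : R}
    (hm : (p.rootMultiplicity x : R) ≠ 0) : p.IsRoot x :=
  of_not_not fun h ↦ hm (by rw [rootMultiplicity_eq_zero h, Nat.cast_zero])

theorem derivative_ne_zero_of_cast_rootMultiplicity_ne_zero {R : Type*} [CommRing R] [IsDomain R]
    {p : R[X]} {x : R} (hm : (p.rootMultiplicity x : R) ≠ 0) : derivative p ≠ 0 := by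
  intro derivative_eq_zero
  have hx : p.IsRoot x := isRoot_of_cast_rootMultiplicity_ne_zero hm
  have hp : p ≠ 0 := fun h ↦ hm (by rw [h, rootMultiplicity_zero, Nat.cast_zero])
  have one_lt : 1 < p.rootMultiplicity x :=
    (one_lt_rootMultiplicity_iff_isRoot hp).2 ⟨hx, by rw [derivative_eq_zero, IsRoot, eval_zero]⟩
  have zero_eq_sub_one : 0 = p.rootMultiplicity x - 1 := by
    rw [← derivative_rootMultiplicity_of_root_of_mem_nonZeroDivisors hx
      (mem_nonZeroDivisors_of_ne_zero hm), derivative_eq_zero, rootMultiplicity_zero]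
  omega

section Field

variable {K : Type*} [Field K] [DecidableEq K] {p q : K[X]} {x : K}

theorem le_rootMultiplicity_gcd_iff (hp : p ≠ 0) {n : ℕ} :
    n ≤ (EuclideanDomain.gcd p q).rootMultiplicity x ↔
      n ≤ p.rootMultiplicity x ∧ (X - C x) ^ n ∣ q := by
  have gcd_ne_zero : EuclideanDomain.gcd p q ≠ 0 := fun h ↦
    hp (EuclideanDomain.gcd_eq_zero_iff.1 h).1
  rw [le_rootMultiplicity_iff gcd_ne_zero, le_rootMultiplicity_iff hp]
  exact ⟨fun h ↦ ⟨h.trans (EuclideanDomain.gcd_dvd_left p q),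
    h.trans (EuclideanDomain.gcd_dvd_right p q)⟩, fun h ↦ EuclideanDomain.dvd_gcd h.1 h.2⟩

theorem rootMultiplicity_gcd_derivative_mul_of_eval_eq_zero (hp : p ≠ 0) (hq : q.eval x = 0) :
    (EuclideanDomain.gcd p (derivative p * q)).rootMultiplicity x = p.rootMultiplicity x := by
  have pow_dvd : (X - C x) ^ p.rootMultiplicity x ∣ derivative p * q :=
    calc (X - C x) ^ p.rootMultiplicity x
      _ ∣ (X - C x) ^ (p.rootMultiplicity x - 1 + 1) := pow_dvd_pow _ le_tsub_add
      _ = (X - C x) ^ (p.rootMultiplicity x - 1) * (X - C x) := pow_succ _ _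
      _ ∣ derivative p * q :=
        mul_dvd_mul (pow_sub_one_dvd_derivative_of_pow_dvd (pow_rootMultiplicity_dvd p x))
          (dvd_iff_isRoot.2 hq)
  exact le_antisymm ((le_rootMultiplicity_gcd_iff hp).1 le_rfl).1
    ((le_rootMultiplicity_gcd_iff hp).2 ⟨le_rfl, pow_dvd⟩)

theorem rootMultiplicity_gcd_derivative_mul_of_eval_ne_zero
    (hm : (p.rootMultiplicity x : K) ≠ 0) (hq : q.eval x ≠ 0) :
    (EuclideanDomain.gcd p (derivative p * q)).rootMultiplicity x = p.rootMultiplicity x - 1 := by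
  have hx : p.IsRoot x := isRoot_of_cast_rootMultiplicity_ne_zero hm
  have derivative_ne_zero : derivative p ≠ 0 :=
    derivative_ne_zero_of_cast_rootMultiplicity_ne_zero hm
  have hp : p ≠ 0 := fun h ↦ derivative_ne_zero (by rw [h, derivative_zero])
  have pow_dvd_iff (n : ℕ) :
      (X - C x) ^ n ∣ derivative p * q ↔ n ≤ p.rootMultiplicity x - 1 := by
    rw [← derivative_rootMultiplicity_of_root_of_mem_nonZeroDivisors hx
      (mem_nonZeroDivisors_of_ne_zero hm), le_rootMultiplicity_iff derivative_ne_zero]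
    exact ⟨(prime_X_sub_C x).pow_dvd_of_dvd_mul_right n (mt dvd_iff_isRoot.1 hq),
      fun h ↦ h.mul_right q⟩
  refine eq_of_forall_le_iff fun n ↦ ?_
  rw [le_rootMultiplicity_gcd_iff hp, pow_dvd_iff]
  exact and_iff_right_of_imp fun h ↦ h.trans (Nat.sub_le _ _)

theorem roots_gcd_derivative_mul_add_roots_filter (hp : p ≠ 0)
    (hm : ∀ x, p.IsRoot x → q.eval x ≠ 0 → (p.rootMultiplicity x : K) ≠ 0) :
    (EuclideanDomain.gcd p (derivative p * q)).roots +
      (p.roots.toFinset.filter fun x ↦ q.eval x ≠ 0).val = p.roots := by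
  ext x
  rw [Multiset.count_add, count_roots, count_roots, Finset.filter_val, Multiset.toFinset_val,
    Multiset.count_filter, Multiset.count_dedup]
  by_cases hq : q.eval x = 0
  · rw [rootMultiplicity_gcd_derivative_mul_of_eval_eq_zero hp hq,
      if_neg (not_not.2 hq), add_zero]
  rw [if_pos hq]
  by_cases hx : p.IsRoot x
  · rw [rootMultiplicity_gcd_derivative_mul_of_eval_ne_zero (hm x hx hq) hq,
      if_pos ((mem_roots hp).2 hx), Nat.sub_add_cancel ((rootMultiplicity_pos hp).2 hx)]
  · have not_isRoot_gcd : ¬(EuclideanDomain.gcd p (derivative p * q)).IsRoot x := fun h ↦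
      hx (h.dvd (EuclideanDomain.gcd_dvd_left p _))
    rw [rootMultiplicity_eq_zero hx, rootMultiplicity_eq_zero not_isRoot_gcd,
      if_neg (mt isRoot_of_mem_roots hx)]

theorem card_roots_filter_eq_natDegree_sub_natDegree_gcd (hp : p ≠ 0) (hsplits : p.Splits)
    (hm : ∀ x, p.IsRoot x → q.eval x ≠ 0 → (p.rootMultiplicity x : K) ≠ 0) :
    (p.roots.toFinset.filter fun x ↦ q.eval x ≠ 0).card =
      p.natDegree - (EuclideanDomain.gcd p (derivative p * q)).natDegree := by
  have gcd_splits : (EuclideanDomain.gcd p (derivative p * q)).Splits :=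
    hsplits.of_dvd hp (EuclideanDomain.gcd_dvd_left p _)
  rw [hsplits.natDegree_eq_card_roots, gcd_splits.natDegree_eq_card_roots]
  refine Nat.eq_sub_of_add_eq' ?_
  rw [← Finset.card_val, ← Multiset.card_add, roots_gcd_derivative_mul_add_roots_filter hp hm]

end Field

open Classical in
theorem invertibility_query_eq_deg_sub_deg_gcd_general
    {L C : Type*} [Field L] [Field C] [Algebra L C] (P Q : L[X]) (hP : P ≠ 0)
    (hsplits : (P.map (algebraMap L C)).Splits)
    (hm : ∀ x : C, aeval x P = 0 → aeval x Q ≠ 0 →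
      ((P.map (algebraMap L C)).rootMultiplicity x : C) ≠ 0) :
    (((P.map (algebraMap L C)).roots.toFinset.filter (fun x => aeval x Q ≠ 0)).card
      = {x : C | aeval x P = 0 ∧ aeval x Q ≠ 0}.ncard)
    ∧ (((P.map (algebraMap L C)).roots.toFinset.filter (fun x => aeval x Q ≠ 0)).card
      = P.natDegree - (EuclideanDomain.gcd P (derivative P * Q)).natDegree) := by
  have map_ne_zero : P.map (algebraMap L C) ≠ 0 := Polynomial.map_ne_zero hP
  constructor
  · rw [← Set.ncard_coe_finset]
    congr 1
    ext x
    simp only [Finset.coe_filter, Multiset.mem_toFinset, mem_roots map_ne_zero, IsRoot,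
      eval_map_algebraMap]
  · simp only [← eval_map_algebraMap] at hm ⊢
    rw [card_roots_filter_eq_natDegree_sub_natDegree_gcd map_ne_zero hsplits hm, derivative_map,
      ← Polynomial.map_mul, gcd_map, natDegree_map, natDegree_map]

open Classical in
/-- Let `L` be a field of characteristic zero and `C` an algebraically
closed extension of `L`. Let `P ∈ L[X]` be monic nonconstant with zero set
`Z = {x ∈ C : P(x) = 0}`, and `Q ∈ L[X]`. Then the invertibility-query of `Q` for `Z`
satisfies `Qu(Q, Z) = card {x ∈ C : P(x) = 0 ∧ Q(x) ≠ 0} = deg P − deg gcd(P, P'·Q)`. -/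
theorem invertibility_query_eq_deg_sub_deg_gcd
    {L C : Type*} [Field L] [CharZero L] [Field C] [IsAlgClosed C] [Algebra L C]
    (P Q : Polynomial L) (hP : P.Monic) (hdeg : 0 < P.natDegree) :
    (((P.map (algebraMap L C)).roots.toFinset.filter
        (fun x => Polynomial.aeval x Q ≠ 0)).card
      = {x : C | Polynomial.aeval x P = 0 ∧ Polynomial.aeval x Q ≠ 0}.ncard)
    ∧ (((P.map (algebraMap L C)).roots.toFinset.filter
        (fun x => Polynomial.aeval x Q ≠ 0)).card
      = P.natDegree - (EuclideanDomain.gcd P (Polynomial.derivative P * Q)).natDegree) := by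
  have : CharZero C := charZero_of_injective_algebraMap (algebraMap L C).injective
  exact invertibility_query_eq_deg_sub_deg_gcd_general P Q hP.ne_zero (IsAlgClosed.splits _)
    fun x hx _ ↦ Nat.cast_ne_zero.2 ((rootMultiplicity_pos (hP.map _).ne_zero).2
      (by rwa [IsRoot, eval_map_algebraMap])).ne'
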